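/- For all positive integers n_1,…,n_k, the polytope P_{n_1,…,n_k} ⊂ ℝ^d satisfies: (a) ℤA(P_{n_1,…,n_k}) = ℤ^{d+1}; (b) P_{n_1,…,n_k} has the integer decomposition property, i.e. for every positive integer n and every a ∈ nP_{n_1,…,n_k} ∩ ℤ^d there exist a_1,…,a_n ∈ P_{n_1,…,n_k} ∩ ℤ^d with a = a_1 + ⋯ + a_n; consequently (c) P_{n_1,…,n_k} is normal: ℕA(P_{n_1,…,n_k}) = ℤA(P_{n_1,…,n_k}) ∩ ℝ≥0A(P_{n_1,…,n_k}). -/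

import Mathlib

/-!
STATEMENT 6: (a) `ℤA(P_{n₁,…,n_k}) = ℤ^{d+1}`; (b) `P_{n₁,…,n_k}` has the
integer decomposition property; (c) `P_{n₁,…,n_k}` is normal, i.e.
`ℕA = ℤA ∩ ℝ≥0A`.
-/

open scoped NNReal Pointwise

noncomputable section

abbrev blockIdx (k : ℕ) (n : Fin k → ℕ) : Type := (p : Fin k) × Fin (n p)

def intCast {α : Type*} (v : α → ℤ) : α → ℝ := fun i => (v i : ℝ)

def latticeA {α : Type*} (L : Set (α → ℤ)) : Set ((α → ℤ) × ℤ) :=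
  (fun v => (v, (1 : ℤ))) '' L

def prodCast {α : Type*} (x : (α → ℤ) × ℤ) : (α → ℝ) × ℝ :=
  (intCast x.1, (x.2 : ℝ))

/-- Normality: `ℕA(P) = ℤA(P) ∩ ℝ≥0A(P)`. -/
def IsNormalPolytope {α : Type*} (L : Set (α → ℤ)) : Prop :=
  ∀ x : (α → ℤ) × ℤ,
    x ∈ AddSubmonoid.closure (latticeA L) ↔
      x ∈ AddSubgroup.closure (latticeA L) ∧
        prodCast x ∈ Submodule.span ℝ≥0 (prodCast '' latticeA L)

/-- The lattice point `i₁ + ⋯ + i_k ∈ B_{n₁,…,n_k}`. -/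
def chooseVecInt {k : ℕ} {n : Fin k → ℕ} (c : ∀ p, Fin (n p)) : blockIdx k n → ℤ :=
  fun j => if c j.1 = j.2 then 1 else 0

/-- The lattice point set `V_{n₁,…,n_k} = {0} ∪ B_d ∪ B_{n₁,…,n_k}`. -/
def latticeSet (k : ℕ) (n : Fin k → ℕ) : Set (blockIdx k n → ℤ) :=
  {0} ∪ {v | ∃ j : blockIdx k n, v = Pi.single j 1} ∪
    {v | ∃ c : ∀ p, Fin (n p), v = chooseVecInt c}

/-- The polytope `P_{n₁,…,n_k} = conv(V_{n₁,…,n_k}) ⊆ ℝ^d`. -/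
def polyP (k : ℕ) (n : Fin k → ℕ) : Set (blockIdx k n → ℝ) :=
  convexHull ℝ (intCast '' latticeSet k n)

/-- The homogenised inequalities valid on the polytope. -/
def goodPt {k : ℕ} {n : Fin k → ℕ} (x : blockIdx k n → ℝ) (t : ℝ) : Prop :=
  (∀ j, 0 ≤ x j) ∧ 0 ≤ t ∧ ∀ q, (∑ j, x j) - ((k : ℝ) - 1) * ∑ i, x ⟨q, i⟩ ≤ t

lemma goodPt_add {k : ℕ} {n : Fin k → ℕ} {x y : blockIdx k n → ℝ} {s t : ℝ}
    (hx : goodPt x s) (hy : goodPt y t) : goodPt (x + y) (s + t) := by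
  obtain ⟨h1, h2, h3⟩ := hx
  obtain ⟨g1, g2, g3⟩ := hy
  refine ⟨fun j => add_nonneg (h1 j) (g1 j), add_nonneg h2 g2, fun q => ?_⟩
  simp only [Pi.add_apply, Finset.sum_add_distrib]
  linarith [h3 q, g3 q, mul_add ((k : ℝ) - 1) (∑ i, x ⟨q, i⟩) (∑ i, y ⟨q, i⟩)]

lemma goodPt_smul {k : ℕ} {n : Fin k → ℕ} {x : blockIdx k n → ℝ} {t : ℝ} {c : ℝ} (hc : 0 ≤ c)
    (hx : goodPt x t) : goodPt (c • x) (c * t) := by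
  obtain ⟨h1, h2, h3⟩ := hx
  refine ⟨fun j => mul_nonneg hc (h1 j), mul_nonneg hc h2, fun q => ?_⟩
  simp only [Pi.smul_apply, smul_eq_mul, ← Finset.mul_sum]
  have := mul_le_mul_of_nonneg_left (h3 q) hc
  linarith

lemma sum_block {k : ℕ} {n : Fin k → ℕ} (v : blockIdx k n → ℤ) :
    ∑ j, v j = ∑ p, ∑ i, v ⟨p, i⟩ := Fintype.sum_sigma _

lemma chooseVecInt_block {k : ℕ} {n : Fin k → ℕ} (c : ∀ p, Fin (n p)) (p : Fin k) :
    ∑ i, chooseVecInt c ⟨p, i⟩ = 1 := by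
  simp [chooseVecInt]

lemma chooseVecInt_sum {k : ℕ} {n : Fin k → ℕ} (c : ∀ p, Fin (n p)) :
    ∑ j, chooseVecInt c j = k := by
  rw [sum_block]; simp [chooseVecInt_block]

lemma goodPt_int {k : ℕ} {n : Fin k → ℕ} (v : blockIdx k n → ℤ) (t : ℤ) :
    goodPt (intCast v) (t : ℝ) ↔ ((∀ j, 0 ≤ v j) ∧ 0 ≤ t ∧
      ∀ q, (∑ j, v j) - ((k : ℤ) - 1) * ∑ i, v ⟨q, i⟩ ≤ t) := by
  unfold goodPt intCast
  refine and_congr (forall_congr' fun j => by norm_cast) (and_congr (by norm_cast) ?_)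
  refine forall_congr' fun q => ?_
  rw [← Int.cast_le (R := ℝ)]
  push_cast
  rfl

lemma goodPt_vertex {k : ℕ} (hk : 0 < k) {n : Fin k → ℕ} {v : blockIdx k n → ℤ}
    (hv : v ∈ latticeSet k n) : goodPt (intCast v) 1 := by
  have := (goodPt_int v 1).2
  rw [Int.cast_one] at this
  apply this
  have hk' : (1 : ℤ) ≤ k := by exact_mod_cast hk
  rcases hv with (hv | ⟨j, rfl⟩) | ⟨c, rfl⟩
  · rw [Set.mem_singleton_iff] at hv
    subst hv
    simp
  · have h0 : ∀ i, (0 : ℤ) ≤ (Pi.single j 1 : blockIdx k n → ℤ) i := by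
      intro i
      rw [Pi.single_apply]
      split_ifs <;> norm_num
    refine ⟨h0, by norm_num, fun q => ?_⟩
    have h1 : ∑ i, (Pi.single j 1 : blockIdx k n → ℤ) i = 1 := by simp
    have h2 : 0 ≤ ∑ i, (Pi.single j 1 : blockIdx k n → ℤ) ⟨q, i⟩ :=
      Finset.sum_nonneg fun i _ => h0 _
    rw [h1]
    nlinarith
  · refine ⟨fun j => ?_, by norm_num, fun q => ?_⟩
    · unfold chooseVecInt
      split_ifs <;> norm_num
    · rw [chooseVecInt_sum, chooseVecInt_block]
      linarith

/-- The combinatorial decomposition: greedily remove one lattice point at a time. -/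
lemma decomp {k : ℕ} {n : Fin k → ℕ} (m : ℕ) : ∀ (a : blockIdx k n → ℤ) (T : ℤ),
    (∀ j, 0 ≤ a j) → 0 ≤ T → (∀ p, T ≤ ∑ i, a ⟨p, i⟩) →
    (∑ j, a j) - ((k : ℤ) - 1) * T ≤ m →
    ∃ f : Fin m → (blockIdx k n → ℤ), (∀ i, f i ∈ latticeSet k n) ∧ a = ∑ i, f i := by
  induction m with
  | zero =>
    intro a T ha hT hs hm
    have h1 : (k : ℤ) * T ≤ ∑ j, a j := by
      rw [sum_block]
      calc (k : ℤ) * T = ∑ p : Fin k, T := by simp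
        _ ≤ _ := Finset.sum_le_sum fun p _ => hs p
    have hT0 : T = 0 := by
      push_cast at hm
      nlinarith
    subst hT0
    have h2 : ∑ j, a j = 0 :=
      le_antisymm (by simpa using hm) (Finset.sum_nonneg fun j _ => ha j)
    rw [Finset.sum_eq_zero_iff_of_nonneg (fun j _ => ha j)] at h2
    refine ⟨fun _ => 0, fun i => i.elim0, ?_⟩
    funext j
    simpa using h2 j (Finset.mem_univ j)
  | succ m ih =>
    intro a T ha hT hs hm
    push_cast at hm
    suffices h : ∃ v ∈ latticeSet k n, ∃ T' : ℤ, (∀ j, 0 ≤ (a - v) j) ∧ 0 ≤ T' ∧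
        (∀ p, T' ≤ ∑ i, (a - v) ⟨p, i⟩) ∧
        (∑ j, (a - v) j) - ((k : ℤ) - 1) * T' ≤ m by
      obtain ⟨v, hv, T', h1, h2, h3, h4⟩ := h
      obtain ⟨f, hf, hfa⟩ := ih (a - v) T' h1 h2 h3 h4
      refine ⟨Fin.cons v f, fun i => ?_, ?_⟩
      · refine Fin.cases ?_ (fun i => ?_) i
        · simpa using hv
        · simpa using hf i
      · rw [Fin.sum_univ_succ]
        simp only [Fin.cons_zero, Fin.cons_succ]
        rw [← hfa]
        abel
    by_cases hT0 : T = 0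
    · subst hT0
      by_cases ha0 : ∃ j, a j ≠ 0
      · obtain ⟨j, hj⟩ := ha0
        have hj1 : 1 ≤ a j := by have := ha j; omega
        have hnn : ∀ i, 0 ≤ (a - Pi.single j 1 : blockIdx k n → ℤ) i := by
          intro i
          rw [Pi.sub_apply, Pi.single_apply]
          split_ifs with h
          · subst h; omega
          · simpa using ha i
        refine ⟨Pi.single j 1, Or.inl (Or.inr ⟨j, rfl⟩), 0, hnn, le_rfl,
          fun p => Finset.sum_nonneg fun i _ => hnn _, ?_⟩
        have h1 : ∑ i, (Pi.single j 1 : blockIdx k n → ℤ) i = 1 := by simp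
        simp only [Pi.sub_apply, Finset.sum_sub_distrib]
        rw [h1]
        linarith
      · push Not at ha0
        refine ⟨0, Or.inl (Or.inl rfl), 0, by simpa using ha, le_rfl, by simpa using hs, ?_⟩
        simp [ha0]
    · have hT1 : 1 ≤ T := by omega
      have hex : ∀ p, ∃ i, 1 ≤ a ⟨p, i⟩ := by
        intro p
        by_contra hcon
        push Not at hcon
        have : ∑ i, a ⟨p, i⟩ ≤ 0 := Finset.sum_nonpos fun i _ => by
          have := hcon i
          omega
        have := hs p
        omega
      choose c hc using hex
      refine ⟨chooseVecInt c, Or.inr ⟨c, rfl⟩, T - 1, ?_, by omega, ?_, ?_⟩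
      · rintro ⟨p, i⟩
        simp only [Pi.sub_apply, chooseVecInt]
        split_ifs with h
        · subst h
          have := hc p
          omega
        · have := ha ⟨p, i⟩
          omega
      · intro p
        simp only [Pi.sub_apply, Finset.sum_sub_distrib]
        rw [chooseVecInt_block]
        linarith [hs p]
      · simp only [Pi.sub_apply, Finset.sum_sub_distrib]
        rw [chooseVecInt_sum]
        linarith

lemma decomp_of_good {k : ℕ} (hk : 0 < k) {n : Fin k → ℕ} (m : ℕ) (a : blockIdx k n → ℤ)
    (h : goodPt (intCast a) (m : ℝ)) :
    ∃ f : Fin m → (blockIdx k n → ℤ), (∀ i, f i ∈ latticeSet k n) ∧ a = ∑ i, f i := by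
  have h' := (goodPt_int a (m : ℤ)).1 (by simpa using h)
  obtain ⟨h1, h2, h3⟩ := h'
  haveI : Nonempty (Fin k) := ⟨⟨0, hk⟩⟩
  obtain ⟨q, hq⟩ := Finite.exists_min (fun p : Fin k => ∑ i, a ⟨p, i⟩)
  exact decomp m a (∑ i, a ⟨q, i⟩) h1 (Finset.sum_nonneg fun i _ => h1 _) hq (h3 q)

lemma good_of_mem_smul {k : ℕ} (hk : 0 < k) {n : Fin k → ℕ} (m : ℕ) (x : blockIdx k n → ℝ)
    (h : x ∈ (m : ℝ) • polyP k n) : goodPt x (m : ℝ) := by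
  obtain ⟨y, hy, rfl⟩ := Set.mem_smul_set.1 h
  have hy1 : goodPt y 1 := by
    refine convexHull_min (t := {y | goodPt y 1}) ?_ ?_ hy
    · rintro _ ⟨v, hv, rfl⟩
      exact goodPt_vertex hk hv
    · intro u hu v hv s t hs ht hst
      have := goodPt_add (goodPt_smul hs hu) (goodPt_smul ht hv)
      simpa [hst] using this
  simpa using goodPt_smul (Nat.cast_nonneg m) hy1

lemma good_of_mem_span {k : ℕ} (hk : 0 < k) {n : Fin k → ℕ} (y : (blockIdx k n → ℝ) × ℝ)
    (h : y ∈ Submodule.span ℝ≥0 (prodCast '' latticeA (latticeSet k n))) :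
    goodPt y.1 y.2 := by
  induction h using Submodule.span_induction with
  | mem x hx =>
    obtain ⟨_, ⟨v, hv, rfl⟩, rfl⟩ := hx
    simpa [prodCast] using goodPt_vertex hk hv
  | zero => simp [goodPt]
  | add x y _ _ hx hy => exact goodPt_add hx hy
  | smul c x _ hx => exact goodPt_smul c.2 hx

lemma closure_top (k : ℕ) (n : Fin k → ℕ) :
    AddSubgroup.closure (latticeA (latticeSet k n)) = ⊤ := by
  rw [eq_top_iff]
  rintro ⟨a, z⟩ -
  have h0 : ((0 : blockIdx k n → ℤ), (1 : ℤ)) ∈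
      AddSubgroup.closure (latticeA (latticeSet k n)) :=
    AddSubgroup.subset_closure ⟨0, Or.inl (Or.inl rfl), rfl⟩
  have h1 : ∀ j, ((Pi.single j 1 : blockIdx k n → ℤ), (0 : ℤ)) ∈
      AddSubgroup.closure (latticeA (latticeSet k n)) := by
    intro j
    have : ((Pi.single j 1 : blockIdx k n → ℤ), (1 : ℤ)) ∈
        AddSubgroup.closure (latticeA (latticeSet k n)) :=
      AddSubgroup.subset_closure ⟨_, Or.inl (Or.inr ⟨j, rfl⟩), rfl⟩
    simpa using sub_mem this h0
  have h2 : (a, z) = (∑ j, a j • ((Pi.single j 1 : blockIdx k n → ℤ), (0 : ℤ))) +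
      z • ((0 : blockIdx k n → ℤ), (1 : ℤ)) := by
    ext i
    · simp [Prod.fst_sum, Finset.sum_apply, Pi.single_apply]
    · simp [Prod.snd_sum]
  rw [h2]
  exact add_mem (sum_mem fun j _ => zsmul_mem (h1 j) _) (zsmul_mem h0 _)

theorem stmt_6 (k : ℕ) (hk : 0 < k) (n : Fin k → ℕ) (hn : ∀ p, 0 < n p) :
    -- (a) `ℤA(P_{n₁,…,n_k}) = ℤ^{d+1}`
    AddSubgroup.closure (latticeA (latticeSet k n)) = ⊤ ∧
    -- (b) the integer decomposition property
    (∀ m : ℕ, 0 < m → ∀ a : blockIdx k n → ℤ,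
      intCast a ∈ (m : ℝ) • polyP k n →
        ∃ f : Fin m → (blockIdx k n → ℤ),
          (∀ i, f i ∈ latticeSet k n) ∧ a = ∑ i, f i) ∧
    -- (c) normality
    IsNormalPolytope (latticeSet k n) := by
  refine ⟨closure_top k n, fun m _ a ha => decomp_of_good hk m a (good_of_mem_smul hk m _ ha), ?_⟩
  intro x
  constructor
  · intro hx
    refine ⟨by rw [closure_top]; trivial, ?_⟩
    induction hx using AddSubmonoid.closure_induction with
    | mem x hx => exact Submodule.subset_span ⟨x, hx, rfl⟩
    | zero =>
      have : prodCast (0 : (blockIdx k n → ℤ) × ℤ) = 0 := by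
        ext <;> simp [prodCast, intCast]
      rw [this]
      exact zero_mem _
    | add x y _ _ hx hy =>
      have : prodCast (x + y) = prodCast x + prodCast y := by
        ext <;> simp [prodCast, intCast]
      rw [this]
      exact add_mem hx hy
  · rintro ⟨-, hx⟩
    have hg := good_of_mem_span hk _ hx
    obtain ⟨a, z⟩ := x
    have hz : 0 ≤ z := ((goodPt_int a z).1 hg).2.1
    obtain ⟨m, rfl⟩ := Int.eq_ofNat_of_zero_le hz
    obtain ⟨f, hf, hfa⟩ := decomp_of_good hk m a (by simpa [prodCast] using hg)
    have h2 : (a, (m : ℤ)) = ∑ i, (f i, (1 : ℤ)) := by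
      ext i
      · simp [Prod.fst_sum, hfa]
      · simp [Prod.snd_sum]
    rw [h2]
    exact sum_mem fun i _ => AddSubmonoid.subset_closure ⟨f i, hf i, rfl⟩

end
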